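/- Head expansion: if M′ ≐ N ∈ A [Ψ] and for every total dimension substitution ψ : Ψ′ → Ψ one has Mψ ↦* M′ψ, then M ≐ N ∈ A [Ψ]. In particular, if M′ ∈ A [Ψ] then M ∈ A [Ψ]. -/

import Mathlib

/-!
Formalization of the syntax, operational semantics, and meaning explanations of
Angiuli–Harper–Wilson computational higher type theory ("Computational
higher-dimensional type theory").  Dimension binders are handled in
locally-nameless style: free dimension names are natural numbers (`Dim.fvar`),
bound dimension variables are de Bruijn indices (`Dim.bvar`).  Term variables
are de Bruijn indices (`Tm.var`).
-/

namespace CHTT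

/-- Dimension terms: the constants 0 and 1, free dimension names, and bound
dimension variables (de Bruijn, for the binders `x.A`, `y.N`, `x.L`). -/
inductive Dim : Type
  | d0 : Dim
  | d1 : Dim
  | fvar : ℕ → Dim
  | bvar : ℕ → Dim
deriving DecidableEq, Repr

namespace Dim

/-- Apply a dimension substitution (acting on free dimension names). -/
def subst (ψ : ℕ → Dim) : Dim → Dim
  | fvar x => ψ x
  | d0 => d0
  | d1 => d1
  | bvar i => bvar i

/-- Instantiate the bound dimension variable `k` with `r`. -/
def openAt (k : ℕ) (r : Dim) : Dim → Dim
  | bvar i => if i = k then r else bvar i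
  | fvar x => fvar x
  | d0 => d0
  | d1 => d1

/-- Abstract the free dimension name `x` to the bound variable `k`. -/
def closeAt (k x : ℕ) : Dim → Dim
  | fvar y => if y = x then bvar k else fvar y
  | bvar i => bvar i
  | d0 => d0
  | d1 => d1

/-- Free dimension names of a dimension term. -/
def fd : Dim → Finset ℕ
  | fvar x => {x}
  | bvar _ => ∅
  | d0 => ∅
  | d1 => ∅

end Dim

/-- A dimension term is a constant (`0` or `1`). -/
def IsConst (r : Dim) : Prop := r = Dim.d0 ∨ r = Dim.d1

/-- Well-formed dimension term relative to a dimension context `Ψ`. -/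
def wfDim (Ψ : Finset ℕ) : Dim → Prop
  | Dim.d0 => True
  | Dim.d1 => True
  | Dim.fvar x => x ∈ Ψ
  | Dim.bvar _ => False

/-- Terms of computational higher type theory. -/
inductive Tm : Type
  | var : ℕ → Tm                              -- term variable (de Bruijn)
  | arr : Tm → Tm → Tm                        -- A → B
  | prod : Tm → Tm → Tm                       -- A × B
  | bool : Tm
  | notb : Dim → Tm                           -- not(r)
  | circle : Tm                               -- S¹
  | lam : Tm → Tm                             -- λa.M
  | app : Tm → Tm → Tm
  | pair : Tm → Tm → Tm
  | fst : Tm → Tm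
  | snd : Tm → Tm
  | tt : Tm                                   -- true
  | ff : Tm                                   -- false
  | ifb : Tm → Tm → Tm → Tm → Tm              -- if(A; M; T; F)
  | notel : Dim → Tm → Tm                     -- not_el(r; M)
  | base : Tm
  | loop : Dim → Tm
  | celim : Tm → Tm → Tm → Tm → Tm            -- S¹-elim(A; M; P; x.L), L binds dim bvar 0
  | coe : Tm → Dim → Dim → Tm → Tm            -- coe(x.A; r⇝r'; M), A binds dim bvar 0
  | hcom : Dim → Tm → Dim → Dim → Tm → Tm → Tm → Tm
      -- hcom^{r₁}_A(r⇝r'; M; y.N⁰, y.N¹), the tubes N⁰ N¹ bind dim bvar 0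
deriving DecidableEq, Repr

namespace Tm

/-- Apply a dimension substitution (acting on free dimension names) to a term. -/
def dsubst (ψ : ℕ → Dim) : Tm → Tm
  | var a => var a
  | arr A B => arr (A.dsubst ψ) (B.dsubst ψ)
  | prod A B => prod (A.dsubst ψ) (B.dsubst ψ)
  | bool => bool
  | notb r => notb (r.subst ψ)
  | circle => circle
  | lam M => lam (M.dsubst ψ)
  | app M N => app (M.dsubst ψ) (N.dsubst ψ)
  | pair M N => pair (M.dsubst ψ) (N.dsubst ψ)
  | fst M => fst (M.dsubst ψ)
  | snd M => snd (M.dsubst ψ)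
  | tt => tt
  | ff => ff
  | ifb A M T F => ifb (A.dsubst ψ) (M.dsubst ψ) (T.dsubst ψ) (F.dsubst ψ)
  | notel r M => notel (r.subst ψ) (M.dsubst ψ)
  | base => base
  | loop r => loop (r.subst ψ)
  | celim A M P L => celim (A.dsubst ψ) (M.dsubst ψ) (P.dsubst ψ) (L.dsubst ψ)
  | coe A r r' M => coe (A.dsubst ψ) (r.subst ψ) (r'.subst ψ) (M.dsubst ψ)
  | hcom e A r r' M N0 N1 =>
      hcom (e.subst ψ) (A.dsubst ψ) (r.subst ψ) (r'.subst ψ) (M.dsubst ψ)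
        (N0.dsubst ψ) (N1.dsubst ψ)

/-- Substitution of a dimension term for a single free dimension name:
`M⟨r/x⟩`. -/
def dsubstName (x : ℕ) (r : Dim) (M : Tm) : Tm :=
  M.dsubst (fun y => if y = x then r else Dim.fvar y)

/-- Instantiate the bound dimension variable `k` with the dimension `r`. -/
def dopenAt (k : ℕ) (r : Dim) : Tm → Tm
  | var a => var a
  | arr A B => arr (A.dopenAt k r) (B.dopenAt k r)
  | prod A B => prod (A.dopenAt k r) (B.dopenAt k r)
  | bool => bool
  | notb r1 => notb (r1.openAt k r)
  | circle => circle
  | lam M => lam (M.dopenAt k r)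
  | app M N => app (M.dopenAt k r) (N.dopenAt k r)
  | pair M N => pair (M.dopenAt k r) (N.dopenAt k r)
  | fst M => fst (M.dopenAt k r)
  | snd M => snd (M.dopenAt k r)
  | tt => tt
  | ff => ff
  | ifb A M T F => ifb (A.dopenAt k r) (M.dopenAt k r) (T.dopenAt k r) (F.dopenAt k r)
  | notel r1 M => notel (r1.openAt k r) (M.dopenAt k r)
  | base => base
  | loop r1 => loop (r1.openAt k r)
  | celim A M P L =>
      celim (A.dopenAt k r) (M.dopenAt k r) (P.dopenAt k r) (L.dopenAt (k+1) r)
  | coe A r1 r2 M =>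
      coe (A.dopenAt (k+1) r) (r1.openAt k r) (r2.openAt k r) (M.dopenAt k r)
  | hcom e A r1 r2 M N0 N1 =>
      hcom (e.openAt k r) (A.dopenAt k r) (r1.openAt k r) (r2.openAt k r)
        (M.dopenAt k r) (N0.dopenAt (k+1) r) (N1.dopenAt (k+1) r)

/-- Instantiate the outermost bound dimension variable: for a dimension binder
`y.N`, `N.dopen r` is `N⟨r/y⟩`. -/
def dopen (r : Dim) (M : Tm) : Tm := M.dopenAt 0 r

/-- Abstract the free dimension name `x` to the bound variable `k`. -/
def closeAt (k x : ℕ) : Tm → Tm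
  | var a => var a
  | arr A B => arr (A.closeAt k x) (B.closeAt k x)
  | prod A B => prod (A.closeAt k x) (B.closeAt k x)
  | bool => bool
  | notb r1 => notb (r1.closeAt k x)
  | circle => circle
  | lam M => lam (M.closeAt k x)
  | app M N => app (M.closeAt k x) (N.closeAt k x)
  | pair M N => pair (M.closeAt k x) (N.closeAt k x)
  | fst M => fst (M.closeAt k x)
  | snd M => snd (M.closeAt k x)
  | tt => tt
  | ff => ff
  | ifb A M T F => ifb (A.closeAt k x) (M.closeAt k x) (T.closeAt k x) (F.closeAt k x)
  | notel r1 M => notel (r1.closeAt k x) (M.closeAt k x)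
  | base => base
  | loop r1 => loop (r1.closeAt k x)
  | celim A M P L =>
      celim (A.closeAt k x) (M.closeAt k x) (P.closeAt k x) (L.closeAt (k+1) x)
  | coe A r1 r2 M =>
      coe (A.closeAt (k+1) x) (r1.closeAt k x) (r2.closeAt k x) (M.closeAt k x)
  | hcom e A r1 r2 M N0 N1 =>
      hcom (e.closeAt k x) (A.closeAt k x) (r1.closeAt k x) (r2.closeAt k x)
        (M.closeAt k x) (N0.closeAt (k+1) x) (N1.closeAt (k+1) x)

/-- Abstract a free dimension name, producing the body of a dimension binder:
`x.(M)`. -/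
def close (x : ℕ) (M : Tm) : Tm := M.closeAt 0 x

/-- Free dimension names of a term: `fd(M)`. -/
def fd : Tm → Finset ℕ
  | var _ => ∅
  | arr A B => A.fd ∪ B.fd
  | prod A B => A.fd ∪ B.fd
  | bool => ∅
  | notb r => r.fd
  | circle => ∅
  | lam M => M.fd
  | app M N => M.fd ∪ N.fd
  | pair M N => M.fd ∪ N.fd
  | fst M => M.fd
  | snd M => M.fd
  | tt => ∅
  | ff => ∅
  | ifb A M T F => A.fd ∪ M.fd ∪ T.fd ∪ F.fd
  | notel r M => r.fd ∪ M.fd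
  | base => ∅
  | loop r => r.fd
  | celim A M P L => A.fd ∪ M.fd ∪ P.fd ∪ L.fd
  | coe A r r' M => A.fd ∪ r.fd ∪ r'.fd ∪ M.fd
  | hcom e A r r' M N0 N1 => e.fd ∪ A.fd ∪ r.fd ∪ r'.fd ∪ M.fd ∪ N0.fd ∪ N1.fd

/-- Shift term variables `≥ c` up by one (for going under a `lam`). -/
def lift (c : ℕ) : Tm → Tm
  | var a => if a < c then var a else var (a+1)
  | arr A B => arr (A.lift c) (B.lift c)
  | prod A B => prod (A.lift c) (B.lift c)
  | bool => bool
  | notb r => notb r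
  | circle => circle
  | lam M => lam (M.lift (c+1))
  | app M N => app (M.lift c) (N.lift c)
  | pair M N => pair (M.lift c) (N.lift c)
  | fst M => fst (M.lift c)
  | snd M => snd (M.lift c)
  | tt => tt
  | ff => ff
  | ifb A M T F => ifb (A.lift c) (M.lift c) (T.lift c) (F.lift c)
  | notel r M => notel r (M.lift c)
  | base => base
  | loop r => loop r
  | celim A M P L => celim (A.lift c) (M.lift c) (P.lift c) (L.lift c)
  | coe A r r' M => coe (A.lift c) r r' (M.lift c)
  | hcom e A r r' M N0 N1 =>
      hcom e (A.lift c) r r' (M.lift c) (N0.lift c) (N1.lift c)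

/-- Substitute `N` for term variable `k` (de Bruijn), decrementing the
variables above `k`: used for β-reduction `M[N/a]`. -/
def tsubst : Tm → ℕ → Tm → Tm
  | var a, k, N => if a = k then N else if k < a then var (a-1) else var a
  | arr A B, k, N => arr (A.tsubst k N) (B.tsubst k N)
  | prod A B, k, N => prod (A.tsubst k N) (B.tsubst k N)
  | bool, _, _ => bool
  | notb r, _, _ => notb r
  | circle, _, _ => circle
  | lam M, k, N => lam (M.tsubst (k+1) (N.lift 0))
  | app M M', k, N => app (M.tsubst k N) (M'.tsubst k N)
  | pair M M', k, N => pair (M.tsubst k N) (M'.tsubst k N)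
  | fst M, k, N => fst (M.tsubst k N)
  | snd M, k, N => snd (M.tsubst k N)
  | tt, _, _ => tt
  | ff, _, _ => ff
  | ifb A M T F, k, N => ifb (A.tsubst k N) (M.tsubst k N) (T.tsubst k N) (F.tsubst k N)
  | notel r M, k, N => notel r (M.tsubst k N)
  | base, _, _ => base
  | loop r, _, _ => loop r
  | celim A M P L, k, N => celim (A.tsubst k N) (M.tsubst k N) (P.tsubst k N) (L.tsubst k N)
  | coe A r r' M, k, N => coe (A.tsubst k N) r r' (M.tsubst k N)
  | hcom e A r r' M N0 N1, k, N =>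
      hcom e (A.tsubst k N) r r' (M.tsubst k N) (N0.tsubst k N) (N1.tsubst k N)

/-- Simultaneous substitution of a list of (closed) terms for the term
variables, the head of the list standing for variable `0`. -/
def msubstAt (d : ℕ) (γ : List Tm) : Tm → Tm
  | var a => if a < d then var a else γ.getD (a - d) (var a)
  | arr A B => arr (A.msubstAt d γ) (B.msubstAt d γ)
  | prod A B => prod (A.msubstAt d γ) (B.msubstAt d γ)
  | bool => bool
  | notb r => notb r
  | circle => circle
  | lam M => lam (M.msubstAt (d+1) γ)
  | app M N => app (M.msubstAt d γ) (N.msubstAt d γ)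
  | pair M N => pair (M.msubstAt d γ) (N.msubstAt d γ)
  | fst M => fst (M.msubstAt d γ)
  | snd M => snd (M.msubstAt d γ)
  | tt => tt
  | ff => ff
  | ifb A M T F => ifb (A.msubstAt d γ) (M.msubstAt d γ) (T.msubstAt d γ) (F.msubstAt d γ)
  | notel r M => notel r (M.msubstAt d γ)
  | base => base
  | loop r => loop r
  | celim A M P L => celim (A.msubstAt d γ) (M.msubstAt d γ) (P.msubstAt d γ) (L.msubstAt d γ)
  | coe A r r' M => coe (A.msubstAt d γ) r r' (M.msubstAt d γ)
  | hcom e A r r' M N0 N1 =>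
      hcom e (A.msubstAt d γ) r r' (M.msubstAt d γ) (N0.msubstAt d γ) (N1.msubstAt d γ)

/-- Simultaneous (closing) term substitution `Mγ`. -/
def msubst (γ : List Tm) (M : Tm) : Tm := M.msubstAt 0 γ

end Tm

/-- `not(M)`, the boolean negation term, abbreviates `if(bool; M; false; true)`. -/
def notTm (M : Tm) : Tm := Tm.ifb Tm.bool M Tm.ff Tm.tt

/-- The canonical forms (values) of the language. -/
inductive IsVal : Tm → Prop
  | arr (A B : Tm) : IsVal (Tm.arr A B)
  | prod (A B : Tm) : IsVal (Tm.prod A B)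
  | bool : IsVal Tm.bool
  | notb (x : ℕ) : IsVal (Tm.notb (Dim.fvar x))
  | circle : IsVal Tm.circle
  | lam (M : Tm) : IsVal (Tm.lam M)
  | pair (M N : Tm) : IsVal (Tm.pair M N)
  | tt : IsVal Tm.tt
  | ff : IsVal Tm.ff
  | base : IsVal Tm.base
  | loop (x : ℕ) : IsVal (Tm.loop (Dim.fvar x))
  | notel (x : ℕ) (M : Tm) : IsVal (Tm.notel (Dim.fvar x) M)
  | hcomBool {x : ℕ} {r r' : Dim} (M N0 N1 : Tm) :
      r ≠ r' → IsVal (Tm.hcom (Dim.fvar x) Tm.bool r r' M N0 N1)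
  | hcomCircle {x : ℕ} {r r' : Dim} (M N0 N1 : Tm) :
      r ≠ r' → IsVal (Tm.hcom (Dim.fvar x) Tm.circle r r' M N0 N1)

/-- The one-step deterministic weak head reduction `M ↦ M′`. -/
inductive Step : Tm → Tm → Prop
  -- types
  | notbConst {ε : Dim} : IsConst ε → Step (Tm.notb ε) Tm.bool
  -- hcom/coe evaluate their type subscript
  | coeTy {A A' : Tm} {r r' : Dim} {M : Tm} :
      Step A A' → Step (Tm.coe A r r' M) (Tm.coe A' r r' M)
  | hcomTy {e : Dim} {A A' : Tm} {r r' : Dim} {M N0 N1 : Tm} :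
      Step A A' → Step (Tm.hcom e A r r' M N0 N1) (Tm.hcom e A' r r' M N0 N1)
  -- function types
  | appL {M M' N : Tm} : Step M M' → Step (Tm.app M N) (Tm.app M' N)
  | appBeta {M N : Tm} : Step (Tm.app (Tm.lam M) N) (M.tsubst 0 N)
  | hcomArr {e : Dim} {A B : Tm} {r r' : Dim} {M N0 N1 : Tm} :
      Step (Tm.hcom e (Tm.arr A B) r r' M N0 N1)
        (Tm.lam (Tm.hcom e B r r'
          (Tm.app (M.lift 0) (Tm.var 0))
          (Tm.app (N0.lift 0) (Tm.var 0))
          (Tm.app (N1.lift 0) (Tm.var 0))))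
  | coeArr {A B : Tm} {r r' : Dim} {M : Tm} :
      Step (Tm.coe (Tm.arr A B) r r' M)
        (Tm.lam (Tm.coe B r r'
          (Tm.app (M.lift 0) (Tm.coe A r' r (Tm.var 0)))))
  -- product types
  | fstCong {M M' : Tm} : Step M M' → Step (Tm.fst M) (Tm.fst M')
  | sndCong {M M' : Tm} : Step M M' → Step (Tm.snd M) (Tm.snd M')
  | fstPair {M N : Tm} : Step (Tm.fst (Tm.pair M N)) M
  | sndPair {M N : Tm} : Step (Tm.snd (Tm.pair M N)) N
  | hcomProd {e : Dim} {A B : Tm} {r r' : Dim} {M N0 N1 : Tm} :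
      Step (Tm.hcom e (Tm.prod A B) r r' M N0 N1)
        (Tm.pair
          (Tm.hcom e A r r' (Tm.fst M) (Tm.fst N0) (Tm.fst N1))
          (Tm.hcom e B r r' (Tm.snd M) (Tm.snd N0) (Tm.snd N1)))
  | coeProd {A B : Tm} {r r' : Dim} {M : Tm} :
      Step (Tm.coe (Tm.prod A B) r r' M)
        (Tm.pair (Tm.coe A r r' (Tm.fst M)) (Tm.coe B r r' (Tm.snd M)))
  -- booleans
  | hcomBool0 {A : Tm} {r r' : Dim} {M N0 N1 : Tm} :
      A = Tm.bool → Step (Tm.hcom Dim.d0 A r r' M N0 N1) (N0.dopen r')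
  | hcomBool1 {A : Tm} {r r' : Dim} {M N0 N1 : Tm} :
      A = Tm.bool → Step (Tm.hcom Dim.d1 A r r' M N0 N1) (N1.dopen r')
  | hcomBoolRefl {x : ℕ} {r : Dim} {M N0 N1 : Tm} :
      Step (Tm.hcom (Dim.fvar x) Tm.bool r r M N0 N1) M
  | ifbCong {A M M' T F : Tm} :
      Step M M' → Step (Tm.ifb A M T F) (Tm.ifb A M' T F)
  | ifbTrue {A T F : Tm} : Step (Tm.ifb A Tm.tt T F) T
  | ifbFalse {A T F : Tm} : Step (Tm.ifb A Tm.ff T F) F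
  | ifbHcom {A : Tm} {x : ℕ} {r r' : Dim} {M N0 N1 T F : Tm} :
      r ≠ r' →
      Step (Tm.ifb A (Tm.hcom (Dim.fvar x) Tm.bool r r' M N0 N1) T F)
        (Tm.hcom (Dim.fvar x) A r r'
          (Tm.ifb A M T F) (Tm.ifb A N0 T F) (Tm.ifb A N1 T F))
  | coeBool {r r' : Dim} {M : Tm} : Step (Tm.coe Tm.bool r r' M) M
  -- circle
  | hcomCircle0 {A : Tm} {r r' : Dim} {M N0 N1 : Tm} :
      A = Tm.circle → Step (Tm.hcom Dim.d0 A r r' M N0 N1) (N0.dopen r')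
  | hcomCircle1 {A : Tm} {r r' : Dim} {M N0 N1 : Tm} :
      A = Tm.circle → Step (Tm.hcom Dim.d1 A r r' M N0 N1) (N1.dopen r')
  | hcomCircleRefl {x : ℕ} {r : Dim} {M N0 N1 : Tm} :
      Step (Tm.hcom (Dim.fvar x) Tm.circle r r M N0 N1) M
  | loopConst {ε : Dim} : IsConst ε → Step (Tm.loop ε) Tm.base
  | celimCong {A M M' P L : Tm} :
      Step M M' → Step (Tm.celim A M P L) (Tm.celim A M' P L)
  | celimBase {A P L : Tm} : Step (Tm.celim A Tm.base P L) P
  | celimLoop {A P L : Tm} {w : ℕ} :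
      Step (Tm.celim A (Tm.loop (Dim.fvar w)) P L) (L.dopen (Dim.fvar w))
  | celimHcom {A : Tm} {x : ℕ} {r r' : Dim} {M N0 N1 P L : Tm} :
      r ≠ r' →
      Step (Tm.celim A (Tm.hcom (Dim.fvar x) Tm.circle r r' M N0 N1) P L)
        (Tm.hcom (Dim.fvar x) A r r'
          (Tm.celim A M P L) (Tm.celim A N0 P L) (Tm.celim A N1 P L))
  | coeCircle {r r' : Dim} {M : Tm} : Step (Tm.coe Tm.circle r r' M) M
  -- not
  | notel0 {M : Tm} : Step (Tm.notel Dim.d0 M) (notTm M)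
  | notel1 {M : Tm} : Step (Tm.notel Dim.d1 M) M
  | coeNotFlip {ε ε' : Dim} {M : Tm} :
      IsConst ε → IsConst ε' → ε ≠ ε' →
      Step (Tm.coe (Tm.notb (Dim.bvar 0)) ε ε' M) (notTm M)
  | coeNotRefl {ε : Dim} {M : Tm} :
      IsConst ε → Step (Tm.coe (Tm.notb (Dim.bvar 0)) ε ε M) M
  | coeNot0x {y : ℕ} {M : Tm} :
      Step (Tm.coe (Tm.notb (Dim.bvar 0)) Dim.d0 (Dim.fvar y) M)
        (Tm.notel (Dim.fvar y) (notTm M))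
  | coeNot1x {y : ℕ} {M : Tm} :
      Step (Tm.coe (Tm.notb (Dim.bvar 0)) Dim.d1 (Dim.fvar y) M)
        (Tm.notel (Dim.fvar y) M)
  | coeNotxCong {y : ℕ} {r : Dim} {M M' : Tm} :
      Step M M' →
      Step (Tm.coe (Tm.notb (Dim.bvar 0)) (Dim.fvar y) r M)
        (Tm.coe (Tm.notb (Dim.bvar 0)) (Dim.fvar y) r M')
  | coeNotxNotel {y : ℕ} {r : Dim} {M : Tm} :
      Step (Tm.coe (Tm.notb (Dim.bvar 0)) (Dim.fvar y) r (Tm.notel (Dim.fvar y) M))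
        (Tm.notel r M)
  | coeNotOther {y : ℕ} {r r' : Dim} {M : Tm} :
      Step (Tm.coe (Tm.notb (Dim.fvar y)) r r' M) M
  | hcomNot {e : Dim} {w : ℕ} {r r' : Dim} {M N0 N1 : Tm} :
      Step (Tm.hcom e (Tm.notb (Dim.fvar w)) r r' M N0 N1)
        (Tm.notel (Dim.fvar w)
          (Tm.hcom e Tm.bool r r'
            (Tm.coe (Tm.notb (Dim.bvar 0)) (Dim.fvar w) Dim.d1 M)
            (Tm.coe (Tm.notb (Dim.bvar 0)) (Dim.fvar w) Dim.d1 N0)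
            (Tm.coe (Tm.notb (Dim.bvar 0)) (Dim.fvar w) Dim.d1 N1)))

/-- Iterated evaluation `M ↦* M′`. -/
def Steps : Tm → Tm → Prop := Relation.ReflTransGen Step

/-- Evaluation `M ⇓ V`. -/
def Eval (M V : Tm) : Prop := Steps M V ∧ IsVal V

/-- `ψ` is a total dimension substitution from `Ψ′` to `Ψ`: every name in `Ψ`
is sent to `0`, `1`, or a name in `Ψ′`. -/
def DSubst (ψ : ℕ → Dim) (Ψ' Ψ : Finset ℕ) : Prop :=
  ∀ x ∈ Ψ, ψ x = Dim.d0 ∨ ψ x = Dim.d1 ∨ ∃ y ∈ Ψ', ψ x = Dim.fvar y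

/-- Composition of dimension substitutions: first `ψ₁`, then `ψ₂`
(so that `M(comp ψ₁ ψ₂) = (Mψ₁)ψ₂`). -/
def dcomp (ψ₁ ψ₂ : ℕ → Dim) : ℕ → Dim := fun x => (ψ₁ x).subst ψ₂

/-- A candidate cubical type system: it designates certain values of each
dimension as naming PERs on values of the same dimension. -/
structure TypeSys where
  /-- The value `A` names a PER at dimension context `Ψ`. -/
  isPer : Finset ℕ → Tm → Prop
  /-- `M ≈ N ∈ ⟦A⟧_Ψ` : values `M`, `N` are related in the PER named by the
  value `A` at `Ψ`. -/
  vper : Finset ℕ → Tm → Tm → Tm → Prop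
  vper_symm : ∀ {Ψ A M N}, vper Ψ A M N → vper Ψ A N M
  vper_trans : ∀ {Ψ A M N P}, vper Ψ A M N → vper Ψ A N P → vper Ψ A M P

namespace TypeSys

variable (τ : TypeSys)

/-- The values `A` and `B` name equal PERs at `Ψ`. -/
def eqPer (Ψ : Finset ℕ) (A B : Tm) : Prop :=
  τ.isPer Ψ A ∧ τ.isPer Ψ B ∧ ∀ M N, (τ.vper Ψ A M N ↔ τ.vper Ψ B M N)

/-- `A ≐ B pretype [Ψ]` : all iterated dimension-substitution instances of `A`
and `B` evaluate coherently to values naming equal PERs. -/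
def ceqPretype (Ψ : Finset ℕ) (A B : Tm) : Prop :=
  ∀ (Ψ₁ Ψ₂ : Finset ℕ) (ψ₁ ψ₂ : ℕ → Dim),
    DSubst ψ₁ Ψ₁ Ψ → DSubst ψ₂ Ψ₂ Ψ₁ →
    ∃ A₁ A₂ A₁₂ B₁ B₂ B₁₂,
      Eval (A.dsubst ψ₁) A₁ ∧ Eval (A₁.dsubst ψ₂) A₂ ∧
      Eval (A.dsubst (dcomp ψ₁ ψ₂)) A₁₂ ∧
      Eval (B.dsubst ψ₁) B₁ ∧ Eval (B₁.dsubst ψ₂) B₂ ∧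
      Eval (B.dsubst (dcomp ψ₁ ψ₂)) B₁₂ ∧
      τ.eqPer Ψ₂ A₂ A₁₂ ∧ τ.eqPer Ψ₂ A₁₂ B₂ ∧ τ.eqPer Ψ₂ B₂ B₁₂

/-- `A pretype [Ψ]`. -/
def cpretype (Ψ : Finset ℕ) (A : Tm) : Prop := τ.ceqPretype Ψ A A

/-- `M ≐ N ∈ A [Ψ]` : all iterated dimension-substitution instances of `M` and
`N` evaluate coherently to values related in the PER named by the value of the
corresponding instance of `A`. -/
def ceqTm (Ψ : Finset ℕ) (A M N : Tm) : Prop :=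
  ∀ (Ψ₁ Ψ₂ : Finset ℕ) (ψ₁ ψ₂ : ℕ → Dim),
    DSubst ψ₁ Ψ₁ Ψ → DSubst ψ₂ Ψ₂ Ψ₁ →
    ∃ M₁ M₂ M₁₂ N₁ N₂ N₁₂ A₁₂,
      Eval (M.dsubst ψ₁) M₁ ∧ Eval (M₁.dsubst ψ₂) M₂ ∧
      Eval (M.dsubst (dcomp ψ₁ ψ₂)) M₁₂ ∧
      Eval (N.dsubst ψ₁) N₁ ∧ Eval (N₁.dsubst ψ₂) N₂ ∧
      Eval (N.dsubst (dcomp ψ₁ ψ₂)) N₁₂ ∧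
      Eval (A.dsubst (dcomp ψ₁ ψ₂)) A₁₂ ∧
      τ.vper Ψ₂ A₁₂ M₂ M₁₂ ∧ τ.vper Ψ₂ A₁₂ M₁₂ N₂ ∧ τ.vper Ψ₂ A₁₂ N₂ N₁₂

/-- `M ∈ A [Ψ]`. -/
def cofTm (Ψ : Finset ℕ) (A M : Tm) : Prop := τ.ceqTm Ψ A M M

/-- The pretype `A` is cubical: values related in the PER named by the value of
any instance `Aψ` are related as full members of `Aψ`. -/
def Cubical (Ψ : Finset ℕ) (A : Tm) : Prop :=
  ∀ (Ψ' : Finset ℕ) (ψ : ℕ → Dim), DSubst ψ Ψ' Ψ →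
    ∀ A₀, Eval (A.dsubst ψ) A₀ →
      ∀ M N, τ.vper Ψ' A₀ M N → τ.ceqTm Ψ' (A.dsubst ψ) M N

end TypeSys

/-- The dimension constant associated to a side `ε ∈ {0,1}` (encoded as a
`Bool`). -/
def dc : Bool → Dim := fun b => bif b then Dim.d1 else Dim.d0

/-- Select the `ε` tube of a composition problem. -/
def pick (b : Bool) (N0 N1 : Tm) : Tm := bif b then N1 else N0

namespace TypeSys

variable (τ : TypeSys)

/-- First uniform Kan condition: well-typedness (and congruence) of `hcom`. -/
def Kan1 (Ψ : Finset ℕ) (A : Tm) : Prop :=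
  ∀ (Ψ' : Finset ℕ) (x : ℕ), x ∉ Ψ' →
  ∀ ψ : ℕ → Dim, DSubst ψ (insert x Ψ') Ψ →
  ∀ r r' : Dim, wfDim (insert x Ψ') r → wfDim (insert x Ψ') r' →
  ∀ y : ℕ, y ∉ insert x Ψ' →
  ∀ M O N0 N1 P0 P1 : Tm,
    τ.ceqTm (insert x Ψ') (A.dsubst ψ) M O →
    (∀ b : Bool,
      τ.ceqTm (insert y Ψ') ((A.dsubst ψ).dsubstName x (dc b))
        (((pick b N0 N1).dopen (Dim.fvar y)).dsubstName x (dc b))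
        (((pick b P0 P1).dopen (Dim.fvar y)).dsubstName x (dc b))) →
    (∀ b : Bool,
      τ.ceqTm Ψ' ((A.dsubst ψ).dsubstName x (dc b))
        (((pick b N0 N1).dopen r).dsubstName x (dc b))
        (M.dsubstName x (dc b))) →
    τ.ceqTm (insert x Ψ') (A.dsubst ψ)
      (Tm.hcom (Dim.fvar x) (A.dsubst ψ) r r' M N0 N1)
      (Tm.hcom (Dim.fvar x) (A.dsubst ψ) r r' O P0 P1)

/-- Second uniform Kan condition: `hcom` from `r` to `r` is its cap. -/
def Kan2 (Ψ : Finset ℕ) (A : Tm) : Prop :=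
  ∀ (Ψ' : Finset ℕ) (x : ℕ), x ∉ Ψ' →
  ∀ ψ : ℕ → Dim, DSubst ψ (insert x Ψ') Ψ →
  ∀ r : Dim, wfDim (insert x Ψ') r →
  ∀ y : ℕ, y ∉ insert x Ψ' →
  ∀ M N0 N1 : Tm,
    τ.cofTm (insert x Ψ') (A.dsubst ψ) M →
    (∀ b : Bool,
      τ.cofTm (insert y Ψ') ((A.dsubst ψ).dsubstName x (dc b))
        (((pick b N0 N1).dopen (Dim.fvar y)).dsubstName x (dc b))) →
    (∀ b : Bool,
      τ.ceqTm Ψ' ((A.dsubst ψ).dsubstName x (dc b))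
        (((pick b N0 N1).dopen r).dsubstName x (dc b))
        (M.dsubstName x (dc b))) →
    τ.ceqTm (insert x Ψ') (A.dsubst ψ)
      (Tm.hcom (Dim.fvar x) (A.dsubst ψ) r r M N0 N1) M

/-- Third uniform Kan condition: `hcom` of extent a constant `ε` is its `ε`
tube face. -/
def Kan3 (Ψ : Finset ℕ) (A : Tm) : Prop :=
  ∀ (Ψ' : Finset ℕ) (ψ : ℕ → Dim), DSubst ψ Ψ' Ψ →
  ∀ r r' : Dim, wfDim Ψ' r → wfDim Ψ' r' →
  ∀ y : ℕ, y ∉ Ψ' →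
  ∀ (b : Bool) (M N0 N1 : Tm),
    τ.cofTm Ψ' (A.dsubst ψ) M →
    τ.cofTm (insert y Ψ') (A.dsubst ψ) ((pick b N0 N1).dopen (Dim.fvar y)) →
    τ.ceqTm Ψ' (A.dsubst ψ) ((pick b N0 N1).dopen r) M →
    τ.ceqTm Ψ' (A.dsubst ψ)
      (Tm.hcom (dc b) (A.dsubst ψ) r r' M N0 N1)
      ((pick b N0 N1).dopen r')

/-- Fourth uniform Kan condition: well-typedness (and congruence) of `coe`. -/
def Kan4 (Ψ : Finset ℕ) (A : Tm) : Prop :=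
  ∀ (Ψ' : Finset ℕ) (x : ℕ), x ∉ Ψ' →
  ∀ ψ : ℕ → Dim, DSubst ψ (insert x Ψ') Ψ →
  ∀ r r' : Dim, wfDim Ψ' r → wfDim Ψ' r' →
  ∀ M N : Tm,
    τ.ceqTm Ψ' ((A.dsubst ψ).dsubstName x r) M N →
    τ.ceqTm Ψ' ((A.dsubst ψ).dsubstName x r')
      (Tm.coe ((A.dsubst ψ).close x) r r' M)
      (Tm.coe ((A.dsubst ψ).close x) r r' N)

/-- The pretype `A` is (uniformly) Kan. -/
def isKan (Ψ : Finset ℕ) (A : Tm) : Prop :=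
  τ.Kan1 Ψ A ∧ τ.Kan2 Ψ A ∧ τ.Kan3 Ψ A ∧ τ.Kan4 Ψ A

/-- `A type [Ψ]` : `A` is a cubical Kan pretype. -/
def ctype (Ψ : Finset ℕ) (A : Tm) : Prop :=
  τ.cpretype Ψ A ∧ τ.Cubical Ψ A ∧ τ.isKan Ψ A

/-- The open judgment `Γ ≫ M ≐ M′ ∈ B [Ψ]`, defined by functionality.  The
context is a list of pretypes, the head corresponding to the innermost
(de Bruijn index `0`) term variable. -/
def eqOpen (t : TypeSys) : Finset ℕ → List Tm → Tm → Tm → Tm → Prop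
  | Ψ, [], B, M, M' => t.ceqTm Ψ B M M'
  | Ψ, A :: Γ, B, M, M' =>
      ∀ (Ψ' : Finset ℕ) (ψ : ℕ → Dim), DSubst ψ Ψ' Ψ →
      ∀ N N' : Tm,
        eqOpen t Ψ' (Γ.map (Tm.dsubst ψ)) (A.dsubst ψ) N N' →
        eqOpen t Ψ' (Γ.map (Tm.dsubst ψ)) (B.dsubst ψ)
          ((M.dsubst ψ).tsubst 0 N) ((M'.dsubst ψ).tsubst 0 N')
  termination_by _ Γ _ _ _ => Γ.length
  decreasing_by all_goals (simp [List.length_map]; try omega)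

/-- Equal simultaneous closing term substitutions `γ ≐ γ′ ∈ Γ [Ψ]`
(componentwise equal elements of the pretypes of `Γ`). -/
def ceqSubst (t : TypeSys) (Ψ : Finset ℕ) : List Tm → List Tm → List Tm → Prop
  | [], [], [] => True
  | A :: Γ, N :: γ, N' :: γ' => t.ceqTm Ψ A N N' ∧ ceqSubst t Ψ Γ γ γ'
  | _, _, _ => False

end TypeSys

/-- The PER of the booleans, as a higher inductive type: the least relation
containing `true ≈ true`, `false ≈ false`, and relating formal `hcom` values
with equal caps and tubes (relative to the ambient type system `τ`). -/
inductive BoolPer (τ : TypeSys) : Finset ℕ → Tm → Tm → Prop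
  | tt (Ψ : Finset ℕ) : BoolPer τ Ψ Tm.tt Tm.tt
  | ff (Ψ : Finset ℕ) : BoolPer τ Ψ Tm.ff Tm.ff
  | hcom (Ψ : Finset ℕ) (x : ℕ) (r r' : Dim) (y : ℕ)
      (M O N0 N1 P0 P1 : Tm) :
      x ∉ Ψ → wfDim (insert x Ψ) r → wfDim (insert x Ψ) r' → r ≠ r' →
      y ∉ insert x Ψ →
      τ.ceqTm (insert x Ψ) Tm.bool M O →
      (∀ b : Bool,
        τ.ceqTm (insert y Ψ) Tm.bool
          (((pick b N0 N1).dopen (Dim.fvar y)).dsubstName x (dc b))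
          (((pick b P0 P1).dopen (Dim.fvar y)).dsubstName x (dc b))) →
      (∀ b : Bool,
        τ.ceqTm Ψ Tm.bool
          (((pick b N0 N1).dopen r).dsubstName x (dc b))
          (M.dsubstName x (dc b))) →
      BoolPer τ (insert x Ψ)
        (Tm.hcom (Dim.fvar x) Tm.bool r r' M N0 N1)
        (Tm.hcom (Dim.fvar x) Tm.bool r r' O P0 P1)

/-- The PER of the circle, as a higher inductive type. -/
inductive CirclePer (τ : TypeSys) : Finset ℕ → Tm → Tm → Prop
  | base (Ψ : Finset ℕ) : CirclePer τ Ψ Tm.base Tm.base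
  | loop (Ψ : Finset ℕ) (x : ℕ) :
      x ∈ Ψ → CirclePer τ Ψ (Tm.loop (Dim.fvar x)) (Tm.loop (Dim.fvar x))
  | hcom (Ψ : Finset ℕ) (x : ℕ) (r r' : Dim) (y : ℕ)
      (M O N0 N1 P0 P1 : Tm) :
      x ∉ Ψ → wfDim (insert x Ψ) r → wfDim (insert x Ψ) r' → r ≠ r' →
      y ∉ insert x Ψ →
      τ.ceqTm (insert x Ψ) Tm.circle M O →
      (∀ b : Bool,
        τ.ceqTm (insert y Ψ) Tm.circle
          (((pick b N0 N1).dopen (Dim.fvar y)).dsubstName x (dc b))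
          (((pick b P0 P1).dopen (Dim.fvar y)).dsubstName x (dc b))) →
      (∀ b : Bool,
        τ.ceqTm Ψ Tm.circle
          (((pick b N0 N1).dopen r).dsubstName x (dc b))
          (M.dsubstName x (dc b))) →
      CirclePer τ (insert x Ψ)
        (Tm.hcom (Dim.fvar x) Tm.circle r r' M N0 N1)
        (Tm.hcom (Dim.fvar x) Tm.circle r r' O P0 P1)

/-- The PER of a product type `A × B`. -/
def ProdPer (τ : TypeSys) (Ψ : Finset ℕ) (A B M N : Tm) : Prop :=
  ∃ M₁ M₂ N₁ N₂, M = Tm.pair M₁ N₁ ∧ N = Tm.pair M₂ N₂ ∧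
    τ.ceqTm Ψ A M₁ M₂ ∧ τ.ceqTm Ψ B N₁ N₂

/-- The PER of a function type `A → B`. -/
def ArrPer (τ : TypeSys) (Ψ : Finset ℕ) (A B M N : Tm) : Prop :=
  ∃ M₁ M₂, M = Tm.lam M₁ ∧ N = Tm.lam M₂ ∧ τ.eqOpen Ψ [A] B M₁ M₂

/-- The PER of the line `not(x)`. -/
def NotPer (τ : TypeSys) (Ψ : Finset ℕ) (x : ℕ) (M N : Tm) : Prop :=
  ∃ M' N', M = Tm.notel (Dim.fvar x) M' ∧ N = Tm.notel (Dim.fvar x) N' ∧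
    τ.ceqTm Ψ Tm.bool M' N'

/-- A cubical type system interpreting the type formers of the paper:
`bool` and `S¹` name their (least, higher inductive) PERs, products,
functions, and the line `not(x)` name the PERs described in the paper. -/
structure StdTypeSys extends TypeSys where
  bool_isPer : ∀ Ψ, isPer Ψ Tm.bool
  bool_vper : ∀ Ψ M N, vper Ψ Tm.bool M N ↔ BoolPer toTypeSys Ψ M N
  circle_isPer : ∀ Ψ, isPer Ψ Tm.circle
  circle_vper : ∀ Ψ M N, vper Ψ Tm.circle M N ↔ CirclePer toTypeSys Ψ M N
  prod_isPer : ∀ Ψ A B, toTypeSys.ctype Ψ A → toTypeSys.ctype Ψ B →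
    isPer Ψ (Tm.prod A B)
  prod_vper : ∀ Ψ A B M N, toTypeSys.ctype Ψ A → toTypeSys.ctype Ψ B →
    (vper Ψ (Tm.prod A B) M N ↔ ProdPer toTypeSys Ψ A B M N)
  arr_isPer : ∀ Ψ A B, toTypeSys.ctype Ψ A → toTypeSys.ctype Ψ B →
    isPer Ψ (Tm.arr A B)
  arr_vper : ∀ Ψ A B M N, toTypeSys.ctype Ψ A → toTypeSys.ctype Ψ B →
    (vper Ψ (Tm.arr A B) M N ↔ ArrPer toTypeSys Ψ A B M N)
  not_isPer : ∀ Ψ x, x ∈ Ψ → isPer Ψ (Tm.notb (Dim.fvar x))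
  not_vper : ∀ Ψ x, x ∈ Ψ → ∀ M N,
    (vper Ψ (Tm.notb (Dim.fvar x)) M N ↔ NotPer toTypeSys Ψ x M N)


theorem DSubst.dcomp' {ψ₁ ψ₂ : ℕ → Dim} {Ψ Ψ₁ Ψ₂ : Finset ℕ}
    (h₁ : DSubst ψ₁ Ψ₁ Ψ) (h₂ : DSubst ψ₂ Ψ₂ Ψ₁) : DSubst (dcomp ψ₁ ψ₂) Ψ₂ Ψ := by
  intro x hx
  rcases h₁ x hx with h | h | ⟨y, hy, h⟩
  · left; simp [dcomp, h, Dim.subst]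
  · right; left; simp [dcomp, h, Dim.subst]
  · have := h₂ y hy
    simpa [dcomp, h, Dim.subst] using this

theorem Eval.expand {M M' V : Tm} (h : Steps M M') (e : Eval M' V) : Eval M V :=
  ⟨Relation.ReflTransGen.trans h e.1, e.2⟩

/-- **Head expansion**: if `M′ ≐ N ∈ A [Ψ]` and every dimension-substitution
instance of `M` head-reduces to the corresponding instance of `M′`, then
`M ≐ N ∈ A [Ψ]`.  In particular, if `M′ ∈ A [Ψ]` then `M ∈ A [Ψ]`. -/
theorem head_expansion (τ : TypeSys) (Ψ : Finset ℕ) (A : Tm) :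
    (∀ M M' N : Tm, τ.ceqTm Ψ A M' N →
      (∀ (Ψ' : Finset ℕ) (ψ : ℕ → Dim), DSubst ψ Ψ' Ψ →
        Steps (M.dsubst ψ) (M'.dsubst ψ)) →
      τ.ceqTm Ψ A M N) ∧
    (∀ M M' : Tm, τ.cofTm Ψ A M' →
      (∀ (Ψ' : Finset ℕ) (ψ : ℕ → Dim), DSubst ψ Ψ' Ψ →
        Steps (M.dsubst ψ) (M'.dsubst ψ)) →
      τ.cofTm Ψ A M) := by
  constructor
  · intro M M' N h hs Ψ₁ Ψ₂ ψ₁ ψ₂ h₁ h₂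
    obtain ⟨M₁, M₂, M₁₂, N₁, N₂, N₁₂, A₁₂, a, b, c, d, e, f, g⟩ := h Ψ₁ Ψ₂ ψ₁ ψ₂ h₁ h₂
    exact ⟨M₁, M₂, M₁₂, N₁, N₂, N₁₂, A₁₂, Eval.expand (hs _ _ h₁) a, b,
      Eval.expand (hs _ _ (DSubst.dcomp' h₁ h₂)) c, d, e, f, g⟩
  · intro M M' h hs Ψ₁ Ψ₂ ψ₁ ψ₂ h₁ h₂
    obtain ⟨M₁, M₂, M₁₂, N₁, N₂, N₁₂, A₁₂, a, b, c, d, e, f, g⟩ := h Ψ₁ Ψ₂ ψ₁ ψ₂ h₁ h₂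
    have k₁ := hs _ _ h₁
    have k₂ := hs _ _ (DSubst.dcomp' h₁ h₂)
    exact ⟨M₁, M₂, M₁₂, N₁, N₂, N₁₂, A₁₂, Eval.expand k₁ a, b,
      Eval.expand k₂ c, Eval.expand k₁ d, e, Eval.expand k₂ f, g⟩

end CHTT
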